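/- arXiv:1109.6521 — 2 statements merged into one kernel-verified Lean document; each statement's English description precedes it below -/
import Mathlib

section
/- For every integer n ≥ 4, the cyclic matching sequencibility of the complete graph K_n equals ⌊(n-1)/2⌋ if n is even, and equals ⌊(n-3)/2⌋ if n is odd. -/
/-- Two edges of a graph (as unordered pairs of vertices) are *disjoint*
if they share no vertex. -/
def edgesDisjoint {V : Type*} (e₁ e₂ : Sym2 V) : Prop :=
  ∀ v : V, v ∈ e₁ → v ∉ e₂

/-- The number of edges of a graph `G`. -/
noncomputable def edgeCount {V : Type*} (G : SimpleGraph V) : ℕ :=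
  Nat.card G.edgeSet

/-- A linear ordering `f` of the edges of `G` has matching number at least `d`
if every `d` consecutive edges in the ordering are pairwise disjoint. -/
def LinearGood {V : Type*} (G : SimpleGraph V)
    (f : Fin (edgeCount G) ≃ G.edgeSet) (d : ℕ) : Prop :=
  ∀ j k : Fin (edgeCount G), j ≠ k → (j : ℕ) < (k : ℕ) + d → (k : ℕ) < (j : ℕ) + d →
    edgesDisjoint (f j : Sym2 V) (f k : Sym2 V)

/-- The matching sequencibility `ms G`: the largest `d` (necessarily at most the
number of edges) for which some linear ordering of the edges of `G` has every
`d` consecutive edges forming a matching. -/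
noncomputable def ms {V : Type*} (G : SimpleGraph V) : ℕ :=
  sSup {d : ℕ | d ≤ edgeCount G ∧ ∃ f : Fin (edgeCount G) ≃ G.edgeSet, LinearGood G f d}

/-- A cyclic ordering `f : ZMod N ≃ edges of G` has cyclic matching number at least `d`
if every `d` cyclically consecutive edges in the ordering are pairwise disjoint. -/
def CyclicGood {V : Type*} (G : SimpleGraph V) {N : ℕ}
    (f : ZMod N ≃ G.edgeSet) (d : ℕ) : Prop :=
  ∀ (i : ZMod N) (j k : ℕ), j < d → k < d → j ≠ k →
    edgesDisjoint (f (i + (j : ZMod N)) : Sym2 V) (f (i + (k : ZMod N)) : Sym2 V)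

/-- The cyclic matching sequencibility `cms G`: the largest `d` for which some
cyclic ordering of the edges of `G` has every `d` cyclically consecutive edges
forming a matching. -/
noncomputable def cms {V : Type*} (G : SimpleGraph V) : ℕ :=
  sSup {d : ℕ | ∃ f : ZMod (edgeCount G) ≃ G.edgeSet, CyclicGood G f d}

/-!
Suppose that every `d` cyclically consecutive edges of `K_n` form a matching. If `n = 2 * d`, such
edges cover all vertices, so the edge after them can only repeat the first of them. If
`n = 2 * d + 1`, they miss exactly one vertex, so consecutive edges at a vertex are `d` or `d + 1`
steps apart. Of the two ends of an edge, one has next gap `d` and the other `d + 1`, and the same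
holds for the preceding gaps. If both gaps around the edge were `d` at the same end, this end would
run ahead of the other all the way round the cycle, but it must be behind when the edge recurs; so
the gaps at each vertex alternate. Then both ends of an edge meet again after `d + (d + 1)` steps,
too early.

For the lower bound with `n = 2 * K + 1`, list for each centre `i` of the regular `n`-gon the
parallel chords `{i + j, i - j}` by increasing `j`, one centre after the other. A chord `j` around
`i` can meet a chord `l` around `i + 1` only if `l` is at least `j - 1`, and then they are at least
`K - 1` steps apart. For `n = 2 * K + 2`, add a point at infinity joined to each centre.
-/

namespace edgesDisjoint

variable {V W : Type*} {e₁ e₂ : Sym2 V}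

lemma symm (h : edgesDisjoint e₁ e₂) : edgesDisjoint e₂ e₁ :=
  fun v h₂ h₁ => h v h₁ h₂

lemma map {φ : V → W} (hφ : φ.Injective) (h : edgesDisjoint e₁ e₂) :
    edgesDisjoint (e₁.map φ) (e₂.map φ) := by
  simp only [edgesDisjoint, Sym2.mem_map]
  rintro _ ⟨v, hv₁, rfl⟩ ⟨w, hw₂, hwv⟩
  exact h v hv₁ (hφ hwv ▸ hw₂)

end edgesDisjoint

section CyclicOrdering

variable {V : Type*} {G : SimpleGraph V} {N d : ℕ} {f : ZMod N ≃ G.edgeSet}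
  {v x : V} {z w : ZMod N}

lemma edgeCount_eq (f : ZMod N ≃ G.edgeSet) : edgeCount G = N := by
  rw [edgeCount, ← Nat.card_congr f, Nat.card_zmod]

lemma edgeCount_top [Fintype V] :
    edgeCount (⊤ : SimpleGraph V) = (Fintype.card V).choose 2 := by
  classical
  rw [edgeCount, Nat.card_eq_fintype_card, ← SimpleGraph.edgeFinset_card,
    SimpleGraph.card_edgeFinset_top_eq_card_choose_two]

lemma exists_mem_ne_of_mem_edgeSet {e : Sym2 V} (he : e ∈ G.edgeSet) (v : V) :
    ∃ x ∈ e, x ≠ v := by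
  induction e with | _ a b =>
  have hab : a ≠ b := G.ne_of_adj he
  by_cases hav : a = v
  · exact ⟨b, Sym2.mem_mk_right a b, hav ▸ hab.symm⟩
  · exact ⟨a, Sym2.mem_mk_left a b, hav⟩

lemma add_natCast_ne_self (z : ZMod N) {j : ℕ} (hj : 0 < j) (hjN : j < N) : z + j ≠ z := by
  intro h
  have hdvd : N ∣ j := (ZMod.natCast_eq_zero_iff j N).1 (add_eq_left.1 h)
  exact (Nat.le_of_dvd hj hdvd).not_gt hjN

lemma position_eq_of_mem_of_mem (hvx : v ≠ x) (hvz : v ∈ (f z : Sym2 V))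
    (hxz : x ∈ (f z : Sym2 V)) (hvw : v ∈ (f w : Sym2 V)) (hxw : x ∈ (f w : Sym2 V)) : z = w :=
  f.injective (Subtype.ext (Sym2.eq_of_ne_mem hvx hvz hxz hvw hxw))

lemma position_eq_of_forall_mem (h : ∀ v ∈ (f z : Sym2 V), v ∈ (f w : Sym2 V)) : z = w := by
  obtain ⟨v, hv, -⟩ := exists_mem_ne_of_mem_edgeSet (f z).2 (f z : Sym2 V).out.1
  obtain ⟨x, hx, hxv⟩ := exists_mem_ne_of_mem_edgeSet (f z).2 v
  exact position_eq_of_mem_of_mem hxv.symm hv hx (h v hv) (h x hx)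

lemma mem_iff_notMem_of_common_vertex {u : V} (hzw : z ≠ w) (huz : u ∈ (f z : Sym2 V))
    (huw : u ∈ (f w : Sym2 V)) (hvx : v ≠ x) (hv : v ∈ (f z : Sym2 V)) (hx : x ∈ (f z : Sym2 V)) :
    v ∈ (f w : Sym2 V) ↔ x ∉ (f w : Sym2 V) := by
  refine ⟨fun hvw hxw => hzw (position_eq_of_mem_of_mem hvx hv hx hvw hxw), fun hxw => ?_⟩
  rw [(Sym2.mem_and_mem_iff hvx).1 ⟨hv, hx⟩, Sym2.mem_iff] at huz
  rcases huz with rfl | rfl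
  · exact huw
  · exact absurd huw hxw

/-- The vertices missed by the `d` consecutive edges of the ordering `f` that start at
position `z`. -/
def unmatched (f : ZMod N ≃ G.edgeSet) (z : ZMod N) (d : ℕ) : Set V :=
  {v | ∀ j < d, v ∉ (f (z + (j : ZMod N)) : Sym2 V)}

namespace CyclicGood

lemma mono {e : ℕ} (hf : CyclicGood G f d) (hed : e ≤ d) : CyclicGood G f e :=
  fun i j k hj hk => hf i j k (hj.trans_le hed) (hk.trans_le hed)

lemma notMem_of_eq_add (hf : CyclicGood G f d) (hv : v ∈ (f z : Sym2 V)) {j : ℕ}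
    (hw : w = z + j) (hj : 0 < j) (hjd : j < d) : v ∉ (f w : Sym2 V) := by
  have hdisj := hf z 0 j (hj.trans hjd) hjd hj.ne
  rw [Nat.cast_zero, add_zero, ← hw] at hdisj
  exact hdisj v hv

lemma ncard_unmatched_add [Fintype V] (hf : CyclicGood G f d) (z : ZMod N) :
    (unmatched f z d).ncard + 2 * d = Fintype.card V := by
  classical
  let matched : Finset V :=
    (Finset.range d).biUnion fun j => (f (z + (j : ZMod N)) : Sym2 V).toFinset
  have hcard : matched.card = 2 * d := by
    rw [Finset.card_biUnion]
    · simp only [Sym2.card_toFinset_of_not_isDiag _ (G.not_isDiag_of_mem_edgeSet (f _).2),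
        Finset.sum_const, Finset.card_range, smul_eq_mul, mul_comm]
    · intro j hj k hk hjk
      rw [Function.onFun, Finset.disjoint_left]
      simp only [Sym2.mem_toFinset]
      exact hf z j k (Finset.mem_range.1 hj) (Finset.mem_range.1 hk) hjk
  have hcompl : unmatched f z d = (matched : Set V)ᶜ := by
    ext v
    simp [unmatched, matched]
  rw [hcompl, ← hcard, ← Set.ncard_coe_finset, add_comm, Set.ncard_add_ncard_compl,
    Nat.card_eq_fintype_card]

lemma mem_or_mem_unmatched (hf : CyclicGood G f d) (hv : v ∈ (f (z + d) : Sym2 V)) :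
    v ∈ (f z : Sym2 V) ∨ v ∈ unmatched f z d := by
  refine or_iff_not_imp_left.2 fun hvz j hjd hvj => ?_
  rcases j.eq_zero_or_pos with rfl | hj
  · exact hvz (by simpa only [Nat.cast_zero, add_zero] using hvj)
  · refine hf.notMem_of_eq_add hvj (j := d - j) ?_ (by omega) (by omega) hv
    rw [Nat.cast_sub hjd.le]
    ring

end CyclicGood

theorem not_cyclicGood_of_card_eq_two_mul [Fintype V] (hV : Fintype.card V = 2 * d)
    (hdN : d < N) : ¬ CyclicGood G f d := by
  intro hf
  have hempty : unmatched f 0 d = ∅ := by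
    have hncard := hf.ncard_unmatched_add 0
    exact (Set.ncard_eq_zero).1 (by omega)
  have hd : 0 < d := by
    obtain ⟨v, -, -⟩ := exists_mem_ne_of_mem_edgeSet (f 0).2 (f 0 : Sym2 V).out.1
    have := Fintype.card_pos_iff.2 ⟨v⟩
    omega
  refine add_natCast_ne_self (0 : ZMod N) hd hdN (position_eq_of_forall_mem (f := f) fun v hv => ?_)
  exact (hf.mem_or_mem_unmatched hv).resolve_right (by simp [hempty])

end CyclicOrdering

section VisitTime

variable {V : Type*} {G : SimpleGraph V} {N d : ℕ} {f : ZMod N ≃ G.edgeSet}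
  {v x : V} {z : ZMod N}

/-- The number of steps from position `z` to the `k`-th edge at `v` in the unrolled cyclic
ordering `f`. The count starts at `k = 0` and includes the edge at position `z` itself. -/
noncomputable def visitTime (f : ZMod N ≃ G.edgeSet) (z : ZMod N) (v : V) : ℕ → ℕ :=
  Nat.nth fun t => v ∈ (f (z + (t : ZMod N)) : Sym2 V)

lemma visitTime_zero (hv : v ∈ (f z : Sym2 V)) : visitTime f z v 0 = 0 :=
  Nat.nth_zero_of_zero (by simpa only [Nat.cast_zero, add_zero] using hv)

lemma setOf_mem_infinite [NeZero N] (hv : v ∈ (f z : Sym2 V)) :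
    {t : ℕ | v ∈ (f (z + (t : ZMod N)) : Sym2 V)}.Infinite :=
  Set.infinite_of_injective_forall_mem (f := fun k : ℕ => k * N)
    (mul_left_injective₀ (NeZero.ne N)) fun k => by simpa using hv

lemma mem_visitTime [NeZero N] (hv : v ∈ (f z : Sym2 V)) (k : ℕ) :
    v ∈ (f (z + (visitTime f z v k : ZMod N)) : Sym2 V) :=
  Nat.nth_mem_of_infinite (setOf_mem_infinite hv) k

lemma visitTime_strictMono [NeZero N] (hv : v ∈ (f z : Sym2 V)) : StrictMono (visitTime f z v) :=
  Nat.nth_strictMono (setOf_mem_infinite hv)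

lemma card_filter_mem_eq_degree [DecidableEq V] [NeZero N] [Fintype (G.neighborSet v)]
    (f : ZMod N ≃ G.edgeSet) (z : ZMod N) :
    ((Finset.range N).filter fun t : ℕ => v ∈ (f (z + (t : ZMod N)) : Sym2 V)).card =
      G.degree v := by
  rw [← G.card_incidenceFinset_eq_degree]
  refine Finset.card_bij (fun t _ => (f (z + (t : ZMod N)) : Sym2 V)) ?_ ?_ ?_
  · intro t ht
    rw [SimpleGraph.mem_incidenceFinset]
    exact ⟨(f _).2, (Finset.mem_filter.1 ht).2⟩
  · intro s hs t ht hst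
    have hcast : (s : ZMod N) = t := add_left_cancel (f.injective (Subtype.ext hst))
    exact CharP.natCast_injOn_Iio (ZMod N) N (Finset.mem_range.1 (Finset.mem_filter.1 hs).1)
      (Finset.mem_range.1 (Finset.mem_filter.1 ht).1) hcast
  · intro e he
    rw [SimpleGraph.mem_incidenceFinset] at he
    have hpos : f (z + ((f.symm ⟨e, he.1⟩ - z).val : ZMod N)) = ⟨e, he.1⟩ := by
      rw [ZMod.natCast_zmod_val, add_sub_cancel, f.apply_symm_apply]
    refine ⟨(f.symm ⟨e, he.1⟩ - z).val, ?_, by rw [hpos]⟩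
    rw [Finset.mem_filter, Finset.mem_range, hpos]
    exact ⟨ZMod.val_lt _, he.2⟩

lemma visitTime_degree [NeZero N] [Fintype (G.neighborSet v)] (hv : v ∈ (f z : Sym2 V)) :
    visitTime f z v (G.degree v) = N := by
  classical
  rw [← card_filter_mem_eq_degree f z, ← Nat.count_eq_card_filter_range]
  exact Nat.nth_count (by simpa only [ZMod.natCast_self, add_zero] using hv)

end VisitTime

namespace CyclicGood

variable {V : Type*} [Fintype V] {G : SimpleGraph V} {N d : ℕ} {f : ZMod N ≃ G.edgeSet}
  {v x : V} {z : ZMod N}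

lemma eq_of_mem_unmatched (hf : CyclicGood G f d) (hV : Fintype.card V = 2 * d + 1)
    (hv : v ∈ unmatched f z d) (hx : x ∈ unmatched f z d) : v = x := by
  have hncard := hf.ncard_unmatched_add z
  exact (Set.ncard_le_one (Set.toFinite _)).1 (by omega) v hv x hx

lemma exists_mem_and_mem_add (hf : CyclicGood G f d) (hV : Fintype.card V = 2 * d + 1)
    (z : ZMod N) : ∃ v, v ∈ (f z : Sym2 V) ∧ v ∈ (f (z + d) : Sym2 V) := by
  by_contra! hno
  have hmissed : ∀ v ∈ (f (z + d) : Sym2 V), v ∈ unmatched f z d := fun v hv =>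
    (hf.mem_or_mem_unmatched hv).resolve_left fun hvz => hno v hvz hv
  obtain ⟨v, hv, -⟩ := exists_mem_ne_of_mem_edgeSet (f (z + d)).2 (f z : Sym2 V).out.1
  obtain ⟨x, hx, hxv⟩ := exists_mem_ne_of_mem_edgeSet (f (z + d)).2 v
  exact hxv (hf.eq_of_mem_unmatched hV (hmissed x hx) (hmissed v hv))

lemma mem_add_or_mem_add_succ (hf : CyclicGood G f d) (hV : Fintype.card V = 2 * d + 1)
    (hd : 0 < d) (hdN : d < N) (hv : v ∈ (f z : Sym2 V)) :
    v ∈ (f (z + d) : Sym2 V) ∨ v ∈ (f (z + d + 1) : Sym2 V) := by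
  by_contra! ⟨hvd, hvd'⟩
  have hmissed : v ∈ unmatched f (z + 1) d := by
    intro j hj hvj
    rcases (Nat.succ_le_of_lt hj).eq_or_lt with rfl | hj'
    · exact hvd (by convert hvj using 3; push_cast; ring)
    · exact hf.notMem_of_eq_add hv (j := j + 1) (by push_cast; ring) j.succ_pos hj' hvj
  refine add_natCast_ne_self (z + 1) hd hdN (position_eq_of_forall_mem (f := f) fun u hu => ?_)
  refine (hf.mem_or_mem_unmatched hu).resolve_right fun hu' => hvd' ?_
  rw [hf.eq_of_mem_unmatched hV hmissed hu', add_right_comm]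
  exact hu

lemma visitTime_succ_eq_or (hf : CyclicGood G f d) (hV : Fintype.card V = 2 * d + 1)
    (hd : 0 < d) (hdN : d < N) (hv : v ∈ (f z : Sym2 V)) (k : ℕ) :
    visitTime f z v (k + 1) = visitTime f z v k + d ∨
      visitTime f z v (k + 1) = visitTime f z v k + d + 1 := by
  have : NeZero N := ⟨by omega⟩
  have hlt : visitTime f z v k < visitTime f z v (k + 1) := visitTime_strictMono hv k.lt_succ_self
  have hge : visitTime f z v k + d ≤ visitTime f z v (k + 1) := by
    by_contra! hclose
    refine hf.notMem_of_eq_add (mem_visitTime hv k)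
      (j := visitTime f z v (k + 1) - visitTime f z v k) ?_ (by omega) (by omega)
      (mem_visitTime hv (k + 1))
    rw [Nat.cast_sub hlt.le]
    ring
  have hfirst : ∀ t, visitTime f z v k < t → v ∈ (f (z + (t : ZMod N)) : Sym2 V) →
      visitTime f z v (k + 1) ≤ t := fun t ht hvt => by
    by_contra! hlt'
    exact (Nat.le_nth_of_lt_nth_succ hlt' hvt).not_gt ht
  rcases hf.mem_add_or_mem_add_succ hV hd hdN (mem_visitTime hv k) with h | h
  · have := hfirst (visitTime f z v k + d) (by omega)
      (by simpa only [Nat.cast_add, add_assoc] using h)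
    omega
  · have := hfirst (visitTime f z v k + d + 1) (by omega)
      (by simpa only [Nat.cast_add, Nat.cast_one, add_assoc] using h)
    omega

lemma visitTime_succ_eq_iff_mem_add (hf : CyclicGood G f d) (hV : Fintype.card V = 2 * d + 1)
    (hd : 1 < d) (hdN : d < N) (hv : v ∈ (f z : Sym2 V)) (k : ℕ) :
    visitTime f z v (k + 1) = visitTime f z v k + d ↔
      v ∈ (f (z + (visitTime f z v k : ZMod N) + d) : Sym2 V) := by
  have : NeZero N := ⟨by omega⟩
  have hmem := mem_visitTime hv (k + 1)
  rcases hf.visitTime_succ_eq_or hV (by omega) hdN hv k with h | h <;> rw [h] at hmem ⊢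
  · simpa only [Nat.cast_add, add_assoc, true_iff] using hmem
  · refine iff_of_false (by omega) fun hmem' => ?_
    exact hf.notMem_of_eq_add hmem' (j := 1) (by push_cast; ring) one_pos hd hmem

lemma visitTime_succ_eq_iff_mem_sub (hf : CyclicGood G f d) (hV : Fintype.card V = 2 * d + 1)
    (hd : 1 < d) (hdN : d < N) (hv : v ∈ (f z : Sym2 V)) (k : ℕ) :
    visitTime f z v (k + 1) = visitTime f z v k + d ↔
      v ∈ (f (z + (visitTime f z v (k + 1) : ZMod N) - d) : Sym2 V) := by
  have : NeZero N := ⟨by omega⟩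
  have hmem := mem_visitTime hv k
  rcases hf.visitTime_succ_eq_or hV (by omega) hdN hv k with h | h <;> rw [h]
  · simpa only [Nat.cast_add, ← add_assoc, add_sub_cancel_right, true_iff] using hmem
  · refine iff_of_false (by omega) fun hmem' => ?_
    exact hf.notMem_of_eq_add hmem (j := 1) (by push_cast; ring) one_pos hd hmem'

/-- Consecutive edges at a vertex are `d` or `d + 1` steps apart, so the later of two vertices
could overtake the earlier one only through a common edge. -/
lemma visitTime_lt_visitTime {n : ℕ} (hf : CyclicGood G f d)
    (hV : Fintype.card V = 2 * d + 1) (hd : 0 < d) (hdN : d < N) (hvx : v ≠ x)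
    (hv : v ∈ (f z : Sym2 V)) (hx : x ∈ (f z : Sym2 V)) (hn : visitTime f z v n = N)
    (hone : visitTime f z v 1 < visitTime f z x 1) {k : ℕ} (hk : 1 ≤ k) (hkn : k < n) :
    visitTime f z v k < visitTime f z x k := by
  have : NeZero N := ⟨by omega⟩
  have hne : ∀ k, 1 ≤ k → k < n → visitTime f z v k ≠ visitTime f z x k := by
    intro k hk hkn heq
    have hpos : 0 < visitTime f z v k := (visitTime_strictMono hv hk).bot_lt
    have hlt : visitTime f z v k < N := (visitTime_strictMono hv hkn).trans_eq hn
    exact add_natCast_ne_self z hpos hlt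
      (position_eq_of_mem_of_mem hvx (mem_visitTime hv k) (heq ▸ mem_visitTime hx k) hv hx)
  induction k, hk using Nat.le_induction with
  | base => exact hone
  | succ k hk ih =>
    have hlt := ih (by omega)
    have hne' := hne (k + 1) (by omega) hkn
    have hgap := hf.visitTime_succ_eq_or hV hd hdN hv k
    have hgap' := hf.visitTime_succ_eq_or hV hd hdN hx k
    omega

lemma mem_add_iff_notMem_add (hf : CyclicGood G f d) (hV : Fintype.card V = 2 * d + 1)
    (hd : 0 < d) (hdN : d < N) (hvx : v ≠ x) (hv : v ∈ (f z : Sym2 V)) (hx : x ∈ (f z : Sym2 V)) :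
    v ∈ (f (z + d) : Sym2 V) ↔ x ∉ (f (z + d) : Sym2 V) := by
  obtain ⟨u, huz, hud⟩ := hf.exists_mem_and_mem_add hV z
  exact mem_iff_notMem_of_common_vertex (add_natCast_ne_self z hd hdN).symm huz hud hvx hv hx

lemma mem_sub_iff_notMem_sub (hf : CyclicGood G f d) (hV : Fintype.card V = 2 * d + 1)
    (hd : 0 < d) (hdN : d < N) (hvx : v ≠ x) (hv : v ∈ (f z : Sym2 V)) (hx : x ∈ (f z : Sym2 V)) :
    v ∈ (f (z - (d : ZMod N)) : Sym2 V) ↔ x ∉ (f (z - (d : ZMod N)) : Sym2 V) := by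
  obtain ⟨u, hud, huz⟩ := hf.exists_mem_and_mem_add hV (z - d)
  rw [sub_add_cancel] at huz
  have hne : z ≠ z - d := by simpa using add_natCast_ne_self (z - (d : ZMod N)) hd hdN
  exact mem_iff_notMem_of_common_vertex hne huz hud hvx hv hx

lemma notMem_sub_of_mem_add [G.LocallyFinite] {n : ℕ} (hf : CyclicGood G f d)
    (hG : G.IsRegularOfDegree n) (hn : 1 < n) (hV : Fintype.card V = 2 * d + 1) (hd : 1 < d)
    (hdN : d < N) (hv : v ∈ (f z : Sym2 V)) (hvd : v ∈ (f (z + d) : Sym2 V)) :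
    v ∉ (f (z - (d : ZMod N)) : Sym2 V) := by
  intro hvd'
  have : NeZero N := ⟨by omega⟩
  obtain ⟨x, hx, hxv⟩ := exists_mem_ne_of_mem_edgeSet (f z).2 v
  have hxd := (hf.mem_add_iff_notMem_add hV (by omega) hdN hxv.symm hv hx).1 hvd
  have hxd' := (hf.mem_sub_iff_notMem_sub hV (by omega) hdN hxv.symm hv hx).1 hvd'
  have hpred : n - 1 + 1 = n := by omega
  have hvN : visitTime f z v n = N := hG.degree_eq v ▸ visitTime_degree hv
  have hxN : visitTime f z x n = N := hG.degree_eq x ▸ visitTime_degree hx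
  have hv_first := hf.visitTime_succ_eq_iff_mem_add hV hd hdN hv 0
  have hx_first := hf.visitTime_succ_eq_iff_mem_add hV hd hdN hx 0
  have hv_last := hf.visitTime_succ_eq_iff_mem_sub hV hd hdN hv (n - 1)
  have hx_last := hf.visitTime_succ_eq_iff_mem_sub hV hd hdN hx (n - 1)
  have hx_first_gap := hf.visitTime_succ_eq_or hV (by omega) hdN hx 0
  have hx_last_gap := hf.visitTime_succ_eq_or hV (by omega) hdN hx (n - 1)
  simp only [visitTime_zero hv, visitTime_zero hx, zero_add, Nat.cast_zero, add_zero, hvd, hxd,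
    iff_true, iff_false] at hv_first hx_first hx_first_gap
  simp only [hpred, hvN, hxN, ZMod.natCast_self, add_zero, hvd', hxd', iff_true, iff_false]
    at hv_last hx_last hx_last_gap
  have hlt := hf.visitTime_lt_visitTime hV (by omega) hdN hxv.symm hv hx hvN (by omega)
    (k := n - 1) (by omega) (by omega)
  omega

/-- At every vertex, the gaps `d` and `d + 1` alternate. -/
lemma mem_add_iff_notMem_sub [G.LocallyFinite] {n : ℕ} (hf : CyclicGood G f d)
    (hG : G.IsRegularOfDegree n) (hn : 1 < n) (hV : Fintype.card V = 2 * d + 1) (hd : 1 < d)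
    (hdN : d < N) (hv : v ∈ (f z : Sym2 V)) :
    v ∈ (f (z + d) : Sym2 V) ↔ v ∉ (f (z - (d : ZMod N)) : Sym2 V) := by
  refine ⟨hf.notMem_sub_of_mem_add hG hn hV hd hdN hv, fun hvd' => ?_⟩
  obtain ⟨x, hx, hxv⟩ := exists_mem_ne_of_mem_edgeSet (f z).2 v
  rw [hf.mem_add_iff_notMem_add hV (by omega) hdN hxv.symm hv hx]
  intro hxd
  refine hf.notMem_sub_of_mem_add hG hn hV hd hdN hx hxd ?_
  rwa [hf.mem_sub_iff_notMem_sub hV (by omega) hdN hxv hx hv]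

end CyclicGood

section Regular

variable {V : Type*} [Fintype V] {G : SimpleGraph V} [G.LocallyFinite] {N d n : ℕ}

lemma two_mul_eq_of_isRegularOfDegree (f : ZMod N ≃ G.edgeSet) (hG : G.IsRegularOfDegree n) :
    2 * N = Fintype.card V * n := by
  classical
  have hN : N = G.edgeFinset.card := by
    rw [← edgeCount_eq f, edgeCount, Nat.card_eq_fintype_card, SimpleGraph.edgeFinset_card]
  rw [hN, ← G.sum_degrees_eq_twice_card_edges, ← smul_eq_mul, ← Finset.card_univ,
    ← Finset.sum_const]
  refine Finset.sum_congr rfl fun v _ => ?_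
  convert hG.degree_eq v

theorem not_cyclicGood_of_isRegularOfDegree {f : ZMod N ≃ G.edgeSet}
    (hG : G.IsRegularOfDegree n) (hn : 2 < n) (hV : Fintype.card V = 2 * d + 1) :
    ¬ CyclicGood G f d := by
  intro hf
  obtain ⟨v, hv, hvd⟩ := hf.exists_mem_and_mem_add hV 0
  have hd : 1 < d := by
    have hlt : G.degree v < Fintype.card V := by
      classical convert G.degree_lt_card_verts v
    rw [hG.degree_eq v] at hlt
    omega
  have hN : 2 * d + 1 < N := by
    have hsum := two_mul_eq_of_isRegularOfDegree f hG
    rw [hV] at hsum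
    nlinarith
  obtain ⟨x, hx, hxv⟩ := exists_mem_ne_of_mem_edgeSet (f 0).2 v
  have hxd := (hf.mem_add_iff_notMem_add hV (by omega) (by omega) hxv.symm hv hx).1 hvd
  have gap_alternates {u : V} {z : ZMod N} (hu : u ∈ (f z : Sym2 V)) :=
    hf.mem_add_iff_notMem_sub hG (by omega) hV hd (by omega) hu
  have next_gap {u : V} {z : ZMod N} (hu : u ∈ (f z : Sym2 V)) :=
    hf.mem_add_or_mem_add_succ hV (by omega) (by omega) hu
  have hv_meet : v ∈ (f (0 + d + d + 1) : Sym2 V) := by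
    refine (next_gap hvd).resolve_left fun hvdd => ?_
    exact (gap_alternates hvd).1 hvdd (by rwa [add_sub_cancel_right])
  have hx_meet : x ∈ (f (0 + d + 1 + d) : Sym2 V) := by
    refine (gap_alternates ((next_gap hx).resolve_left hxd)).2 ?_
    exact hf.notMem_of_eq_add hx (j := 1) (by push_cast; ring) one_pos hd
  have hmeet : (0 : ZMod N) + (2 * d + 1 : ℕ) = 0 + d + d + 1 := by push_cast; ring
  refine add_natCast_ne_self 0 (Nat.succ_pos _) hN
    (position_eq_of_mem_of_mem hxv.symm (hmeet ▸ hv_meet) ?_ hv hx)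
  rwa [hmeet, add_right_comm]

end Regular

section BlockOrdering

variable {V : Type*} {G : SimpleGraph V} {n L : ℕ} [NeZero n] [NeZero L]

/-- The lexicographic cyclic ordering of `n` blocks of length `L`: position `t` is the
`t % L`-th place of block `t / L`. -/
def blockEquiv (n L : ℕ) [NeZero n] [NeZero L] : ZMod (n * L) ≃ ZMod n × Fin L :=
  (ZMod.finEquiv (n * L)).symm.toEquiv.trans
    (finProdFinEquiv.symm.trans ((ZMod.finEquiv n).toEquiv.prodCongr (Equiv.refl (Fin L))))

open Fin.CommRing in
lemma blockEquiv_natCast (t : ℕ) :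
    blockEquiv n L (t : ZMod (n * L)) = (((t / L : ℕ) : ZMod n), Fin.ofNat L t) := by
  have hpos : (ZMod.finEquiv (n * L)).symm t = Fin.ofNat (n * L) t := by
    rw [map_natCast]
    rfl
  have hdiv : (Fin.ofNat (n * L) t).divNat = Fin.ofNat n (t / L) :=
    Fin.ext (Nat.mod_mul_left_div_self t L n)
  have hmod : (Fin.ofNat (n * L) t).modNat = Fin.ofNat L t :=
    Fin.ext (Nat.mod_mul_left_mod t n L)
  have hblock : ZMod.finEquiv n (Fin.ofNat n (t / L)) = ((t / L : ℕ) : ZMod n) :=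
    map_natCast (ZMod.finEquiv n) (t / L)
  simp only [blockEquiv, Equiv.trans_apply, finProdFinEquiv_symm_apply, Equiv.prodCongr_apply,
    Prod.map_apply, Equiv.refl_apply, RingEquiv.toEquiv_eq_coe, EquivLike.coe_coe, hpos, hdiv,
    hmod, hblock]

lemma div_eq_and_mod_lt_or_of_lt_add {L s t : ℕ} (hst : s < t) (hts : t < s + (L - 1)) :
    (t / L = s / L ∧ s % L < t % L) ∨ (t / L = s / L + 1 ∧ t % L + 2 ≤ s % L) := by
  have hL : 0 < L := by omega
  have hs := Nat.div_add_mod s L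
  have ht := Nat.div_add_mod t L
  have hs_mod := Nat.mod_lt s hL
  have ht_mod := Nat.mod_lt t hL
  have hge : s / L ≤ t / L := Nat.div_le_div_right hst.le
  have hle : t / L ≤ s / L + 1 := by
    rw [← Nat.add_div_right s hL]
    exact Nat.div_le_div_right (by omega)
  rcases hge.eq_or_lt with h | h
  · rw [← h] at ht
    omega
  · have heq : t / L = s / L + 1 := by omega
    rw [heq, mul_add] at ht
    omega

lemma cyclicGood_of_lt {N d : ℕ} [NeZero N] {f : ZMod N ≃ G.edgeSet}
    (h : ∀ s t : ℕ, s < t → t < s + d →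
      edgesDisjoint (f (s : ZMod N) : Sym2 V) (f (t : ZMod N) : Sym2 V)) :
    CyclicGood G f d := by
  intro i j k hj hk hjk
  rw [← ZMod.natCast_zmod_val i, ← Nat.cast_add, ← Nat.cast_add]
  rcases hjk.lt_or_gt with hlt | hlt
  · exact h _ _ (by omega) (by omega)
  · exact (h _ _ (by omega) (by omega)).symm

lemma cyclicGood_blockEquiv_trans {e : ZMod n × Fin L ≃ G.edgeSet}
    (same : ∀ (i : ZMod n) (j l : Fin L), j < l →
      edgesDisjoint (e (i, j) : Sym2 V) (e (i, l) : Sym2 V))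
    (next : ∀ (i : ZMod n) (j l : Fin L), (l : ℕ) + 2 ≤ j →
      edgesDisjoint (e (i, j) : Sym2 V) (e (i + 1, l) : Sym2 V)) :
    CyclicGood G ((blockEquiv n L).trans e) (L - 1) := by
  refine cyclicGood_of_lt fun s t hst hts => ?_
  simp only [Equiv.trans_apply, blockEquiv_natCast]
  rcases div_eq_and_mod_lt_or_of_lt_add hst hts with ⟨hdiv, hmod⟩ | ⟨hdiv, hmod⟩
  · rw [hdiv]
    exact same _ _ _ hmod
  · rw [hdiv, Nat.cast_succ]
    exact next _ _ _ hmod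

lemma exists_cyclicGood_top_of_injective [Fintype V] {e : ZMod n × Fin L → Sym2 V}
    (hcard : n * L = (Fintype.card V).choose 2) (hdiag : ∀ p, ¬ (e p).IsDiag)
    (hinj : e.Injective)
    (same : ∀ (i : ZMod n) (j l : Fin L), j < l → edgesDisjoint (e (i, j)) (e (i, l)))
    (next : ∀ (i : ZMod n) (j l : Fin L), (l : ℕ) + 2 ≤ j →
      edgesDisjoint (e (i, j)) (e (i + 1, l))) :
    ∃ f : ZMod (n * L) ≃ (⊤ : SimpleGraph V).edgeSet, CyclicGood _ f (L - 1) := by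
  let edge : ZMod n × Fin L → (⊤ : SimpleGraph V).edgeSet := fun p =>
    ⟨e p, SimpleGraph.edgeSet_top ▸ hdiag p⟩
  have hedge : edge.Bijective := by
    rw [Nat.bijective_iff_injective_and_card]
    refine ⟨fun p q hpq => hinj (congrArg Subtype.val hpq), ?_⟩
    rw [← edgeCount, edgeCount_top, ← hcard, Nat.card_prod, Nat.card_zmod, Nat.card_fin]
  exact ⟨_, cyclicGood_blockEquiv_trans (e := Equiv.ofBijective edge hedge) same next⟩

end BlockOrdering

section Chord

variable {n : ℕ} {i i' w : ZMod n} {j l : ℕ}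

/-- The pair of vertices of the regular `n`-gon at distance `j` on either side of the centre
`i`. -/
def chord (i : ZMod n) (j : ℕ) : Sym2 (ZMod n) :=
  s(i + j, i - j)

lemma natCast_inj_of_lt (hj : j < n) (hl : l < n) : (j : ZMod n) = l ↔ j = l :=
  (CharP.natCast_injOn_Iio (ZMod n) n).eq_iff hj hl

lemma edgesDisjoint_chord (i : ZMod n) {δ : ℕ} (hn : δ + j + l < n) (hj : j ≠ δ + l)
    (hl : l ≠ δ + j) (hδ : δ ≠ j + l) (hpos : 0 < δ + j + l) :
    edgesDisjoint (chord i j) (chord (i + δ) l) := by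
  simp only [edgesDisjoint, chord, Sym2.mem_iff, not_or]
  rintro _ (rfl | rfl)
  · refine ⟨fun h => hj ?_, fun h => hδ ?_⟩ <;>
      rw [← natCast_inj_of_lt (n := n) (by omega) (by omega)] <;> push_cast
    · linear_combination h
    · linear_combination -h
  · refine ⟨fun h => hpos.ne ?_, fun h => hl ?_⟩ <;>
      rw [← natCast_inj_of_lt (n := n) (by omega) (by omega)] <;> push_cast
    · linear_combination h
    · linear_combination h

lemma chord_inj (hn : Odd n) (hjl : j + l < n) :
    chord i j = chord i' l ↔ i = i' ∧ j = l := by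
  refine ⟨fun h => ?_, fun ⟨hi, hj⟩ => by rw [hi, hj]⟩
  rw [chord, chord, Sym2.eq_iff] at h
  obtain rfl : i = i' := by
    rw [← sub_eq_zero, ← ZMod.add_self_eq_zero_iff_eq_zero hn]
    rcases h with ⟨h₁, h₂⟩ | ⟨h₁, h₂⟩ <;> linear_combination h₁ + h₂
  refine ⟨rfl, ?_⟩
  rcases h with ⟨h, -⟩ | ⟨h, -⟩
  · exact (natCast_inj_of_lt (by omega) (by omega)).1 (add_left_cancel h)
  · have hzero : ((j + l : ℕ) : ZMod n) = (0 : ℕ) := by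
      push_cast
      linear_combination h
    have := (natCast_inj_of_lt hjl (by omega)).1 hzero
    omega

lemma chord_not_isDiag (hn : Odd n) (hj : 0 < j) (hjn : j < n) : ¬ (chord i j).IsDiag := by
  rw [chord, Sym2.mk_isDiag_iff]
  intro h
  have hzero : (j : ZMod n) = (0 : ℕ) := by
    rw [Nat.cast_zero, ← ZMod.add_self_eq_zero_iff_eq_zero hn]
    linear_combination h
  exact hj.ne' ((natCast_inj_of_lt hjn (by omega)).1 hzero)

/-- The chord `chord i j` in the vertex set extended by a point at infinity `none`, which
replaces one end of the degenerate chord `chord i 0`. -/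
def pointedChord (i : ZMod n) (j : ℕ) : Sym2 (Option (ZMod n)) :=
  if j = 0 then s(some i, none) else (chord i j).map some

lemma some_mem_pointedChord : some w ∈ pointedChord i j ↔ w ∈ chord i j := by
  rcases eq_or_ne j 0 with rfl | hj
  · simp [pointedChord, chord]
  · simp [pointedChord, hj]

lemma none_mem_pointedChord : none ∈ pointedChord i j ↔ j = 0 := by
  by_cases hj : j = 0 <;> simp [pointedChord, hj]

lemma edgesDisjoint_pointedChord (h : edgesDisjoint (chord i j) (chord i' l))
    (hjl : j ≠ l) : edgesDisjoint (pointedChord i j) (pointedChord i' l) := by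
  rintro (_ | w)
  · rw [none_mem_pointedChord, none_mem_pointedChord]
    omega
  · rw [some_mem_pointedChord, some_mem_pointedChord]
    exact h w

lemma pointedChord_inj (hn : Odd n) (hjl : j + l < n) :
    pointedChord i j = pointedChord i' l ↔ i = i' ∧ j = l := by
  refine ⟨fun h => (chord_inj hn hjl).1 (Sym2.ext fun w => ?_), fun ⟨hi, hj⟩ => by rw [hi, hj]⟩
  rw [← some_mem_pointedChord, h, some_mem_pointedChord]

lemma pointedChord_not_isDiag (hn : Odd n) (hjn : j < n) : ¬ (pointedChord i j).IsDiag := by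
  rw [pointedChord]
  split_ifs with hj
  · simp
  · rw [Sym2.isDiag_map (Option.some_injective _)]
    exact chord_not_isDiag hn (Nat.pos_of_ne_zero hj) hjn

end Chord

theorem exists_cyclicGood_top_zmod (K : ℕ) [NeZero K] :
    ∃ f : ZMod ((2 * K + 1) * K) ≃ (⊤ : SimpleGraph (ZMod (2 * K + 1))).edgeSet,
      CyclicGood _ f (K - 1) := by
  have hodd : Odd (2 * K + 1) := odd_two_mul_add_one K
  refine exists_cyclicGood_top_of_injective (e := fun p => chord p.1 (p.2 + 1)) ?_
    (fun p => chord_not_isDiag hodd (Nat.succ_pos _) (by omega)) ?_ (fun i j l hjl => ?_)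
    fun i j l hjl => ?_
  · rw [ZMod.card, Nat.choose_two_right, Nat.add_sub_cancel, mul_left_comm,
      Nat.mul_div_cancel_left _ two_pos]
  · rintro ⟨i, j⟩ ⟨i', l⟩ h
    dsimp only at h
    obtain ⟨rfl, hjl⟩ := (chord_inj hodd (by omega)).1 h
    rw [Fin.ext (Nat.succ_injective hjl)]
  · simpa only [Nat.cast_zero, add_zero] using edgesDisjoint_chord i (δ := 0) (j := j + 1)
      (l := l + 1) (by omega) (by omega) (by omega) (by omega) (by omega)
  · simpa only [Nat.cast_one] using edgesDisjoint_chord i (δ := 1) (j := j + 1)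
      (l := l + 1) (by omega) (by omega) (by omega) (by omega) (by omega)

theorem exists_cyclicGood_top_option_zmod (K : ℕ) :
    ∃ f : ZMod ((2 * K + 1) * (K + 1)) ≃ (⊤ : SimpleGraph (Option (ZMod (2 * K + 1)))).edgeSet,
      CyclicGood _ f K := by
  have hodd : Odd (2 * K + 1) := odd_two_mul_add_one K
  refine exists_cyclicGood_top_of_injective (L := K + 1) (e := fun p => pointedChord p.1 p.2) ?_
    (fun p => pointedChord_not_isDiag hodd (by omega)) ?_ (fun i j l hjl => ?_)
    fun i j l hjl => ?_
  · rw [Fintype.card_option, ZMod.card, Nat.choose_two_right, Nat.add_sub_cancel,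
      show 2 * K + 1 + 1 = 2 * (K + 1) by ring, mul_assoc, Nat.mul_div_cancel_left _ two_pos,
      mul_comm]
  · rintro ⟨i, j⟩ ⟨i', l⟩ h
    dsimp only at h
    obtain ⟨rfl, hjl⟩ := (pointedChord_inj hodd (by omega)).1 h
    rw [Fin.ext hjl]
  · refine edgesDisjoint_pointedChord ?_ (by dsimp only; omega)
    simpa only [Nat.cast_zero, add_zero] using edgesDisjoint_chord i (δ := 0) (j := j)
      (l := l) (by omega) (by omega) (by omega) (by omega) (by omega)
  · refine edgesDisjoint_pointedChord ?_ (by dsimp only; omega)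
    simpa only [Nat.cast_one] using edgesDisjoint_chord i (δ := 1) (j := j)
      (l := l) (by omega) (by omega) (by omega) (by omega) (by omega)

section Sequencibility

variable {V W : Type*} {G : SimpleGraph V} {H : SimpleGraph W} {N d : ℕ}

lemma CyclicGood.trans_mapEdgeSet {f : ZMod N ≃ G.edgeSet} (hf : CyclicGood G f d)
    (φ : G ≃g H) : CyclicGood H (f.trans φ.mapEdgeSet) d :=
  fun i j k hj hk hjk => (hf i j k hj hk hjk).map φ.injective

lemma cms_eq_of_cyclicGood {f : ZMod N ≃ G.edgeSet} (hf : CyclicGood G f d)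
    (hmax : ∀ g : ZMod N ≃ G.edgeSet, ¬ CyclicGood G g (d + 1)) : cms G = d := by
  obtain rfl := edgeCount_eq f
  refine IsGreatest.csSup_eq ⟨⟨f, hf⟩, ?_⟩
  rintro e ⟨g, hg⟩
  by_contra! hlt
  exact hmax g (hg.mono hlt)

variable [Fintype V]

theorem cms_top_of_card_eq_two_mul_add_two {K : ℕ} (hK : 0 < K)
    (hV : Fintype.card V = 2 * K + 2) : cms (⊤ : SimpleGraph V) = K := by
  obtain ⟨f, hf⟩ := exists_cyclicGood_top_option_zmod K
  have hcard : Fintype.card (Option (ZMod (2 * K + 1))) = Fintype.card V := by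
    rw [Fintype.card_option, ZMod.card, hV]
  refine cms_eq_of_cyclicGood
    (hf.trans_mapEdgeSet (SimpleGraph.Iso.completeGraph (Fintype.equivOfCardEq hcard))) fun g => ?_
  exact not_cyclicGood_of_card_eq_two_mul (by omega) (by nlinarith)

theorem cms_top_of_card_eq_two_mul_add_one {K : ℕ} (hK : 1 < K)
    (hV : Fintype.card V = 2 * K + 1) : cms (⊤ : SimpleGraph V) = K - 1 := by
  classical
  have : NeZero K := ⟨by omega⟩
  obtain ⟨f, hf⟩ := exists_cyclicGood_top_zmod K
  have hcard : Fintype.card (ZMod (2 * K + 1)) = Fintype.card V := by rw [ZMod.card, hV]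
  refine cms_eq_of_cyclicGood
    (hf.trans_mapEdgeSet (SimpleGraph.Iso.completeGraph (Fintype.equivOfCardEq hcard))) fun g => ?_
  exact not_cyclicGood_of_isRegularOfDegree SimpleGraph.IsRegularOfDegree.top (by omega) (by omega)

theorem cms_completeGraph_general (hV : 4 ≤ Fintype.card V) :
    cms (⊤ : SimpleGraph V) =
      if Even (Fintype.card V) then (Fintype.card V - 1) / 2 else (Fintype.card V - 3) / 2 := by
  split_ifs with h
  · obtain ⟨m, hm⟩ := h
    rw [cms_top_of_card_eq_two_mul_add_two (K := m - 1) (by omega) (by omega)]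
    omega
  · obtain ⟨m, hm⟩ := Nat.not_even_iff_odd.1 h
    rw [cms_top_of_card_eq_two_mul_add_one (by omega) hm]
    omega

end Sequencibility

/-- For every integer `n ≥ 4`, the cyclic matching sequencibility of
the complete graph `K_n` equals `⌊(n-1)/2⌋` if `n` is even and `⌊(n-3)/2⌋` if `n` is odd. -/
theorem cms_completeGraph (n : ℕ) (hn : 4 ≤ n) :
    cms (⊤ : SimpleGraph (Fin n)) = if Even n then (n - 1) / 2 else (n - 3) / 2 := by
  simpa only [Fintype.card_fin] using
    cms_completeGraph_general (V := Fin n) (hn.trans_eq (Fintype.card_fin n).symm)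
end

section
/- For every integer n ≥ 3, let G be the 3-regular bipartite graph with parts {a_0,...,a_{n-1}} and {b_0,...,b_{n-1}} where a_i is adjacent to b_j if and only if j - i ≡ -1, 0, or 1 (mod n) (i.e., G has biadjacency matrix P^{-1} + I + P for the full-cycle permutation matrix P of order n). Then cms(G) = ms(G) = n - 1. -/
/-- The `3`-regular bipartite graph on parts `{a_0, …, a_{n-1}}` and
`{b_0, …, b_{n-1}}` where `a_i ~ b_j` iff `j - i ≡ -1, 0, 1 (mod n)`; its
biadjacency matrix is `P⁻¹ + I + P` for the full-cycle permutation matrix `P`. -/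
def circulantBipartite (n : ℕ) : SimpleGraph (Fin n ⊕ Fin n) :=
  SimpleGraph.fromRel (fun x y =>
    ∃ i j : Fin n, x = Sum.inl i ∧ y = Sum.inr j ∧
      (((j : ZMod n) - (i : ZMod n) = -1) ∨ ((j : ZMod n) = (i : ZMod n)) ∨
        ((j : ZMod n) - (i : ZMod n) = 1)))

/-!
A graph on at most `2 n` vertices with more than `n` edges has no edge ordering in which every
`n` consecutive edges form a matching: edges `1, …, n` would cover all the vertices, while edge `0`
meets none of edges `1, …, n - 1` and differs from edge `n`, so one of its ends stays uncovered.

For the circulant graph an ordering attaining `n - 1` consists of three rounds of `n` edges. Round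
one runs through the edges `a_t b_t`. The other edges are grouped into pairs
`{a_t b_{t+1}, a_{t+1} b_t}`, with `t` even in round two and `t` odd in round three. Round two keeps
every `b_t` in the place it has in round one, and round three every `a_t`. So each vertex moves in
only one of the rounds, and there by a single place: any two edges at it are at least `n - 1` apart.
Only the edges around the ends `0` and `n - 1` need a separate arrangement, which depends on the
parity of `n`.
-/

section Matchings

variable {V : Type*}

theorem edgesDisjoint_comm {e₁ e₂ : Sym2 V} : edgesDisjoint e₁ e₂ ↔ edgesDisjoint e₂ e₁ :=
  ⟨fun h v h₂ h₁ => h v h₁ h₂, fun h v h₁ h₂ => h v h₂ h₁⟩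

theorem edgesDisjoint_iff_disjoint_toFinset [DecidableEq V] {e₁ e₂ : Sym2 V} :
    edgesDisjoint e₁ e₂ ↔ Disjoint e₁.toFinset e₂.toFinset := by
  simp only [edgesDisjoint, Finset.disjoint_left, Sym2.mem_toFinset]

theorem not_edgesDisjoint_self (e : Sym2 V) : ¬ edgesDisjoint e e := fun h =>
  h _ e.out_fst_mem e.out_fst_mem

theorem card_biUnion_toFinset_of_pairwise_edgesDisjoint [DecidableEq V] {ι : Type*}
    (s : Finset ι) (e : ι → Sym2 V) (hdiag : ∀ i ∈ s, ¬ (e i).IsDiag)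
    (hdisj : (s : Set ι).Pairwise fun i j => edgesDisjoint (e i) (e j)) :
    (s.biUnion fun i => (e i).toFinset).card = 2 * s.card := by
  rw [Finset.card_biUnion fun i hi j hj hij =>
      edgesDisjoint_iff_disjoint_toFinset.1 (hdisj hi hj hij),
    Finset.sum_congr rfl fun i hi => Sym2.card_toFinset_of_not_isDiag _ (hdiag i hi),
    Finset.sum_const, smul_eq_mul, mul_comm]

theorem exists_mem_notMem_of_ne {e₁ e₂ : Sym2 V} (h₁ : ¬ e₁.IsDiag) (h : e₁ ≠ e₂) :
    ∃ v ∈ e₁, v ∉ e₂ := by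
  by_contra! hsub
  induction e₁ using Sym2.ind with
  | _ x y =>
    exact h ((Sym2.mem_and_mem_iff (by simpa using h₁)).1
      ⟨hsub x (Sym2.mem_mk_left x y), hsub y (Sym2.mem_mk_right x y)⟩).symm

end Matchings

section Orderings

variable {V : Type*} {G : SimpleGraph V} {d : ℕ}

theorem linearGood_iff {f : Fin (edgeCount G) ≃ G.edgeSet} :
    LinearGood G f d ↔
      ∀ j k : Fin (edgeCount G), j < k → (k : ℕ) < j + d →
        edgesDisjoint (f j : Sym2 V) (f k : Sym2 V) := by
  refine ⟨fun h j k hjk hkd => h j k hjk.ne (by omega) hkd, fun h j k hjk hj hk => ?_⟩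
  rcases hjk.lt_or_gt with hlt | hgt
  · exact h j k hlt hk
  · exact edgesDisjoint_comm.1 (h k j hgt hj)

theorem cyclicGood_iff {N : ℕ} {f : ZMod N ≃ G.edgeSet} :
    CyclicGood G f d ↔
      ∀ (x : ZMod N) (m : ℕ), 0 < m → m < d →
        edgesDisjoint (f x : Sym2 V) (f (x + m) : Sym2 V) := by
  constructor
  · intro h x m hm hmd
    simpa using h x 0 m (by omega) hmd hm.ne
  · intro h i
    have ordered : ∀ j k : ℕ, k < d → j < k →
        edgesDisjoint (f (i + j) : Sym2 V) (f (i + k) : Sym2 V) := by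
      intro j k hk hjk
      have := h (i + j) (k - j) (by omega) (by omega)
      rwa [add_assoc, ← Nat.cast_add, Nat.add_sub_cancel' hjk.le] at this
    intro j k hj hk hjk
    rcases hjk.lt_or_gt with hlt | hgt
    · exact ordered j k hk hlt
    · exact edgesDisjoint_comm.1 (ordered k j hj hgt)

theorem CyclicGood.le_of_neZero {N : ℕ} [NeZero N] {f : ZMod N ≃ G.edgeSet}
    (hf : CyclicGood G f d) : d ≤ N := by
  by_contra! hNd
  simpa [not_edgesDisjoint_self] using cyclicGood_iff.1 hf 0 N (NeZero.pos N) hNd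

theorem val_finEquiv {N : ℕ} [NeZero N] (j : Fin N) : (ZMod.finEquiv N j).val = j := by
  cases N with
  | zero => exact j.elim0
  | succ N => rfl

theorem finEquiv_eq_natCast {N : ℕ} [NeZero N] (j : Fin N) : ZMod.finEquiv N j = (j : ℕ) := by
  rw [← val_finEquiv j, ZMod.natCast_zmod_val]

theorem CyclicGood.linearGood [NeZero (edgeCount G)] {f : ZMod (edgeCount G) ≃ G.edgeSet}
    (hf : CyclicGood G f d) :
    LinearGood G ((ZMod.finEquiv (edgeCount G)).toEquiv.trans f) d := by
  refine linearGood_iff.2 fun j k hjk hkd => ?_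
  have := cyclicGood_iff.1 hf (j : ℕ) (k - j) (by omega) (by omega)
  rw [← Nat.cast_add, Nat.add_sub_cancel' (by omega)] at this
  simpa [finEquiv_eq_natCast] using this

theorem CyclicGood.le_cms [NeZero (edgeCount G)] {f : ZMod (edgeCount G) ≃ G.edgeSet}
    (hf : CyclicGood G f d) : d ≤ cms G :=
  le_csSup ⟨edgeCount G, fun _ ⟨_, hg⟩ => hg.le_of_neZero⟩ ⟨f, hf⟩

theorem cms_le_ms (G : SimpleGraph V) [NeZero (edgeCount G)] : cms G ≤ ms G :=
  csSup_le' fun _ ⟨_, hf⟩ =>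
    le_csSup ⟨edgeCount G, fun _ h => h.1⟩ ⟨hf.le_of_neZero, _, hf.linearGood⟩

theorem cyclicGood_of_spaced {N : ℕ} [NeZero N] (e : Fin N ≃ G.edgeSet) (hd : d ≤ N)
    (he : ∀ s t, s < t → ¬ edgesDisjoint (e s : Sym2 V) (e t : Sym2 V) →
      (s : ℕ) + d ≤ t ∧ (t : ℕ) + d ≤ s + N) :
    CyclicGood G ((ZMod.finEquiv N).symm.toEquiv.trans e) d := by
  refine cyclicGood_iff.2 fun x m hm hmd => ?_
  obtain ⟨s, rfl⟩ := (ZMod.finEquiv N).surjective x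
  obtain ⟨t, ht⟩ := (ZMod.finEquiv N).surjective (ZMod.finEquiv N s + m)
  have hval : (t : ℕ) = (s + m) % N := by
    rw [← val_finEquiv t, ht, finEquiv_eq_natCast, ← Nat.cast_add, ZMod.val_natCast]
  have hstep : (t : ℕ) = s + m ∨ (t : ℕ) + N = s + m := by
    rw [Nat.add_mod_eq_ite, Nat.mod_eq_of_lt s.2, Nat.mod_eq_of_lt (by omega)] at hval
    split_ifs at hval <;> omega
  rw [← ht]
  simp only [RingEquiv.toEquiv_eq_coe, Equiv.trans_apply, EquivLike.coe_coe,
    RingEquiv.symm_apply_apply]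
  by_contra hmeet
  rcases lt_trichotomy s t with hst | rfl | hts
  · have := he s t hst hmeet
    omega
  · omega
  · have := he t s hts (mt edgesDisjoint_comm.1 hmeet)
    omega

theorem le_cms_of_spaced {N : ℕ} [NeZero N] (e : Fin N ≃ G.edgeSet) (hd : d ≤ N)
    (he : ∀ s t, s < t → ¬ edgesDisjoint (e s : Sym2 V) (e t : Sym2 V) →
      (s : ℕ) + d ≤ t ∧ (t : ℕ) + d ≤ s + N) : d ≤ cms G := by
  obtain rfl : N = edgeCount G := by rw [edgeCount, ← Nat.card_congr e, Nat.card_fin]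
  exact (cyclicGood_of_spaced e hd he).le_cms

theorem LinearGood.two_mul_lt_card [Fintype V] {f : Fin (edgeCount G) ≃ G.edgeSet}
    (hf : LinearGood G f d) (hd : d < edgeCount G) : 2 * d < Fintype.card V := by
  classical
  let first : G.edgeSet := f ⟨0, by omega⟩
  let next : Fin d → G.edgeSet := fun i => f ⟨i + 1, by omega⟩
  have covered : (Finset.univ.biUnion fun i => (next i : Sym2 V).toFinset).card = 2 * d := by
    rw [card_biUnion_toFinset_of_pairwise_edgesDisjoint _ _
      fun i _ => G.not_isDiag_of_mem_edgeSet (next i).2, Finset.card_fin]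
    intro i _ j _ hij
    exact hf _ _ (by simpa [Fin.ext_iff] using hij) (by simp only; omega) (by simp only; omega)
  obtain ⟨v, hv⟩ : ∃ v, ∀ i, v ∉ (next i : Sym2 V) := by
    rcases d.eq_zero_or_pos with rfl | hd0
    · exact ⟨(first : Sym2 V).out.1, fun i => i.elim0⟩
    obtain ⟨v, hv, hv_last⟩ : ∃ v ∈ (first : Sym2 V), v ∉ (f ⟨d, hd⟩ : Sym2 V) :=
      exists_mem_notMem_of_ne (G.not_isDiag_of_mem_edgeSet first.2)
        (by simpa [first, Subtype.ext_iff.symm] using hd0.ne)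
    refine ⟨v, fun i => ?_⟩
    by_cases hi : (i : ℕ) + 1 = d
    · simpa only [next, hi] using hv_last
    · exact linearGood_iff.1 hf _ _ (by simp [Fin.lt_def]) (by simp only; omega) v hv
  rw [← covered]
  exact Finset.card_lt_univ_of_notMem (x := v) (by simpa using hv)

theorem LinearGood.mono {d' : ℕ} {f : Fin (edgeCount G) ≃ G.edgeSet} (hf : LinearGood G f d)
    (hd : d' ≤ d) : LinearGood G f d' :=
  fun j k hjk hj hk => hf j k hjk (by omega) (by omega)

theorem ms_le_of_card_le [Fintype V] (hV : Fintype.card V ≤ 2 * (d + 1))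
    (hd : d + 1 < edgeCount G) : ms G ≤ d := by
  refine csSup_le' fun d' ⟨_, f, hf⟩ => ?_
  by_contra! hlt
  have := (hf.mono (Nat.succ_le_of_lt hlt)).two_mul_lt_card hd
  omega

end Orderings

section Schedule

/-- The successor of `t` in the cyclic order `0, 1, …, n - 1`. -/
def cyclicSucc (n t : ℕ) : ℕ := if t + 1 = n then 0 else t + 1

/-- The partner of `t` when `0, 1, …, n - 1` is paired off cyclically, each `t` of parity `r` being
matched with its successor. -/
def mate (n r t : ℕ) : ℕ := if t % 2 = r then cyclicSucc n t else t - 1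

/-- The index `i` of the vertex `a_i` on the edge at position `T < 3 n` of the ordering. Round two
starts with `a_0 b_1, a_1 b_0`, taken in the opposite order to its other pairs. -/
def leftIndex (n T : ℕ) : ℕ :=
  if T < n then T
  else if T < n + 2 then T - n
  else if T < 2 * n then mate n 0 (T - n)
  else if T = 2 * n then if n % 2 = 0 then 0 else n - 1
  else T - 2 * n

/-- The index `j` of the vertex `b_j` on the edge at position `T < 3 n` of the ordering. -/
def rightIndex (n T : ℕ) : ℕ :=
  if T = 0 then if n % 2 = 0 then n - 1 else 0
  else if T < n then T
  else if T < n + 2 then n + 1 - T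
  else if T < 2 * n then T - n
  else if T = 2 * n then 0
  else mate n 1 (T - 2 * n)

/-- The position of the edge `a_i b_j` in the ordering, inverse to `leftIndex` and `rightIndex`. The
first two cases are the edges joining the ends `0` and `n - 1`. -/
def position (n i j : ℕ) : ℕ :=
  if i = 0 ∧ j = n - 1 then if n % 2 = 0 then 0 else 2 * n - 1
  else if i = n - 1 ∧ j = 0 then if n % 2 = 0 then 3 * n - 1 else 2 * n
  else if i = j then if i = 0 ∧ n % 2 = 0 then 2 * n else i
  else if i + j = 1 then n + i
  else if min i j % 2 = 0 then n + j
  else 2 * n + i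

/-- The adjacency of `a_i` and `b_j` in `circulantBipartite n`, for indices `i, j < n`. -/
def CyclicallyClose (n i j : ℕ) : Prop := j = i ∨ j = cyclicSucc n i ∨ i = cyclicSucc n j

variable {n : ℕ}

theorem leftIndex_lt (hn : 3 ≤ n) {T : ℕ} (hT : T < 3 * n) : leftIndex n T < n := by
  grind (splits := 25) [leftIndex, mate, cyclicSucc]

theorem rightIndex_lt (hn : 3 ≤ n) {T : ℕ} (hT : T < 3 * n) : rightIndex n T < n := by
  grind (splits := 25) [rightIndex, mate, cyclicSucc]

theorem cyclicallyClose_leftIndex_rightIndex (hn : 3 ≤ n) {T : ℕ} (hT : T < 3 * n) :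
    CyclicallyClose n (leftIndex n T) (rightIndex n T) := by
  grind (splits := 25) [CyclicallyClose, leftIndex, rightIndex, mate, cyclicSucc]

theorem leftIndex_spaced {s t : ℕ} (hst : s < t) (h : leftIndex n s = leftIndex n t) :
    s + (n - 1) ≤ t ∧ t + (n - 1) ≤ s + 3 * n := by
  grind (splits := 25) [leftIndex, mate, cyclicSucc]

theorem rightIndex_spaced {s t : ℕ} (hst : s < t) (ht : t < 3 * n)
    (h : rightIndex n s = rightIndex n t) : s + (n - 1) ≤ t ∧ t + (n - 1) ≤ s + 3 * n := by
  grind (splits := 25) [rightIndex, mate, cyclicSucc]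

theorem position_lt {i j : ℕ} (hi : i < n) (hj : j < n) : position n i j < 3 * n := by
  grind (splits := 25) [position]

theorem position_leftIndex_rightIndex (hn : 3 ≤ n) {T : ℕ} (hT : T < 3 * n) :
    position n (leftIndex n T) (rightIndex n T) = T := by
  grind (splits := 25) [position, leftIndex, rightIndex, mate, cyclicSucc]

theorem leftIndex_position {i j : ℕ} (hi : i < n) (hij : CyclicallyClose n i j) :
    leftIndex n (position n i j) = i := by
  grind (splits := 25) [CyclicallyClose, position, leftIndex, mate, cyclicSucc]

theorem rightIndex_position (hn : 3 ≤ n) {i j : ℕ} (hi : i < n) (hij : CyclicallyClose n i j) :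
    rightIndex n (position n i j) = j := by
  grind (splits := 25) [CyclicallyClose, position, rightIndex, mate, cyclicSucc]

end Schedule

section CirculantBipartite

variable {n : ℕ}

theorem natCast_eq_natCast_add_one_iff {i j : ℕ} (hi : i < n) (hj : j < n) :
    (j : ZMod n) = i + 1 ↔ j = cyclicSucc n i := by
  have hcast : (i + 1 : ZMod n) = (cyclicSucc n i : ℕ) := by
    unfold cyclicSucc
    split_ifs with h
    · simpa using congrArg (Nat.cast : ℕ → ZMod n) h
    · push_cast; rfl
  have hlt : cyclicSucc n i < n := by
    unfold cyclicSucc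
    split_ifs <;> omega
  rw [hcast, ZMod.natCast_eq_natCast_iff', Nat.mod_eq_of_lt hj, Nat.mod_eq_of_lt hlt]

theorem circulantBipartite_adj_inl_inr {i j : Fin n} :
    (circulantBipartite n).Adj (Sum.inl i) (Sum.inr j) ↔ CyclicallyClose n i j := by
  have hpred : (j : ZMod n) - i = -1 ↔ (i : ℕ) = cyclicSucc n j := by
    rw [← natCast_eq_natCast_add_one_iff j.2 i.2, sub_eq_iff_eq_add, ← sub_eq_neg_add,
      eq_sub_iff_add_eq, eq_comm]
  have hsucc : (j : ZMod n) - i = 1 ↔ (j : ℕ) = cyclicSucc n i := by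
    rw [← natCast_eq_natCast_add_one_iff i.2 j.2, sub_eq_iff_eq_add']
  have heq : (j : ZMod n) = i ↔ (j : ℕ) = i := by
    rw [ZMod.natCast_eq_natCast_iff', Nat.mod_eq_of_lt i.2, Nat.mod_eq_of_lt j.2]
  simp only [circulantBipartite, exists_and_left, SimpleGraph.fromRel_adj, ne_eq, reduceCtorEq,
    not_false_eq_true, Sum.inl.injEq, Sum.inr.injEq, exists_eq_left', hpred, heq, hsucc, false_and,
    exists_false, and_self, or_false, true_and, CyclicallyClose]
  tauto

theorem exists_eq_of_mem_edgeSet_circulantBipartite {e : Sym2 (Fin n ⊕ Fin n)}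
    (he : e ∈ (circulantBipartite n).edgeSet) : ∃ i j, e = s(Sum.inl i, Sum.inr j) := by
  induction e using Sym2.ind with
  | _ x y =>
    rw [SimpleGraph.mem_edgeSet, circulantBipartite, SimpleGraph.fromRel_adj] at he
    rcases he with ⟨-, ⟨i, j, rfl, rfl, -⟩ | ⟨i, j, rfl, rfl, -⟩⟩
    · exact ⟨i, j, rfl⟩
    · exact ⟨i, j, Sym2.eq_swap⟩

theorem edgesDisjoint_inl_inr {α β : Type*} {a a' : α} {b b' : β} :
    edgesDisjoint s(Sum.inl a, Sum.inr b) s(Sum.inl a', Sum.inr b') ↔ a ≠ a' ∧ b ≠ b' := by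
  simp [edgesDisjoint]

/-- The edge of `circulantBipartite n` at position `T` of the ordering. -/
def scheduledEdge (hn : 3 ≤ n) (T : Fin (3 * n)) : (circulantBipartite n).edgeSet :=
  ⟨s(Sum.inl ⟨leftIndex n T, leftIndex_lt hn T.2⟩, Sum.inr ⟨rightIndex n T, rightIndex_lt hn T.2⟩),
    circulantBipartite_adj_inl_inr.2 (cyclicallyClose_leftIndex_rightIndex hn T.2)⟩

theorem scheduledEdge_injective (hn : 3 ≤ n) : Function.Injective (scheduledEdge hn) := by
  intro s t hst
  obtain ⟨hleft, hright⟩ : leftIndex n s = leftIndex n t ∧ rightIndex n s = rightIndex n t := by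
    simpa [scheduledEdge] using congrArg Subtype.val hst
  rw [Fin.ext_iff, ← position_leftIndex_rightIndex hn s.2, hleft, hright,
    position_leftIndex_rightIndex hn t.2]

theorem scheduledEdge_surjective (hn : 3 ≤ n) : Function.Surjective (scheduledEdge hn) := by
  rintro ⟨e, he⟩
  obtain ⟨i, j, rfl⟩ := exists_eq_of_mem_edgeSet_circulantBipartite he
  have hij : CyclicallyClose n i j := circulantBipartite_adj_inl_inr.1 he
  refine ⟨⟨position n i j, position_lt i.2 j.2⟩, ?_⟩
  simp only [scheduledEdge, leftIndex_position i.2 hij, rightIndex_position hn i.2 hij]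

/-- The ordering of the edges of `circulantBipartite n` that attains cyclic matching number
`n - 1`. -/
noncomputable def schedule (hn : 3 ≤ n) : Fin (3 * n) ≃ (circulantBipartite n).edgeSet :=
  Equiv.ofBijective (scheduledEdge hn) ⟨scheduledEdge_injective hn, scheduledEdge_surjective hn⟩

theorem coe_schedule (hn : 3 ≤ n) (T : Fin (3 * n)) :
    (schedule hn T : Sym2 (Fin n ⊕ Fin n)) =
      s(Sum.inl ⟨leftIndex n T, leftIndex_lt hn T.2⟩,
        Sum.inr ⟨rightIndex n T, rightIndex_lt hn T.2⟩) :=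
  rfl

theorem edgeCount_circulantBipartite (hn : 3 ≤ n) : edgeCount (circulantBipartite n) = 3 * n := by
  rw [edgeCount, ← Nat.card_congr (schedule hn), Nat.card_fin]

theorem schedule_spaced (hn : 3 ≤ n) {s t : Fin (3 * n)} (hst : s < t)
    (hmeet : ¬ edgesDisjoint (schedule hn s : Sym2 (Fin n ⊕ Fin n)) (schedule hn t)) :
    (s : ℕ) + (n - 1) ≤ t ∧ (t : ℕ) + (n - 1) ≤ s + 3 * n := by
  have hshare : leftIndex n s = leftIndex n t ∨ rightIndex n s = rightIndex n t := by
    simpa [coe_schedule, edgesDisjoint_inl_inr, or_iff_not_imp_left] using hmeet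
  exact hshare.elim (leftIndex_spaced hst) (rightIndex_spaced hst t.2)

end CirculantBipartite

/-- For every integer `n ≥ 3`, the `3`-regular bipartite graph `G`
with biadjacency matrix `P⁻¹ + I + P` satisfies `cms G = ms G = n - 1`. -/
theorem cms_ms_circulantBipartite (n : ℕ) (hn : 3 ≤ n) :
    cms (circulantBipartite n) = n - 1 ∧ ms (circulantBipartite n) = n - 1 := by
  have hcount : edgeCount (circulantBipartite n) = 3 * n := edgeCount_circulantBipartite hn
  have : NeZero (3 * n) := ⟨by omega⟩
  have : NeZero (edgeCount (circulantBipartite n)) := ⟨by omega⟩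
  have hlower : n - 1 ≤ cms (circulantBipartite n) :=
    le_cms_of_spaced (schedule hn) (by omega) fun _ _ => schedule_spaced hn
  have hmiddle : cms (circulantBipartite n) ≤ ms (circulantBipartite n) := cms_le_ms _
  have hupper : ms (circulantBipartite n) ≤ n - 1 :=
    ms_le_of_card_le (by simp only [Fintype.card_sum, Fintype.card_fin]; omega) (by omega)
  omega
end
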